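/- Let X1 and X2 be random vectors in ℝ^{d1} and ℝ^{d2} whose joint distribution is absolutely continuous with respect to Lebesgue measure on ℝ^{d1+d2} and satisfies E‖X1‖ < ∞ and E‖X2‖ < ∞. Let (X_{1i}, X_{2i}), i = 1,…,4, be independent copies of (X1, X2). Then E[ ∏_{k=1}^{2} ( ‖X_{k1} − X_{k2}‖ − ‖X_{k1} − X_{k3}‖ − ‖X_{k4} − X_{k2}‖ + ‖X_{k4} − X_{k3}‖ ) ] ≥ 0, with equality if and only if X1 and X2 are independent. -/

import Mathlib

open MeasureTheory

/-!
By an integral-geometric Crofton formula, `‖x - y‖` is the measure of the half-spaces separating `x`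
from `y`. Polarising turns each double difference of distances into an integral, over half-spaces
`H`, of products of differences of indicators of `H`. Multiplying the formulas for the two factors
and exchanging integrals, the expectation becomes `16` times the integral of
`(P (X₁ ∈ H, X₂ ∈ K) - P (X₁ ∈ H) P (X₂ ∈ K)) ^ 2` over pairs of half-spaces `(H, K)`. It is thus
nonnegative, and it vanishes if and only if the joint law and the product of its marginals agree on
almost all `H × K`; by the Cramér–Wold device, they are then equal.
-/

section Determination

open Set Filter Topology

theorem ext_of_dense_Ici {α : Type*} [TopologicalSpace α] [MeasurableSpace α]
    [SecondCountableTopology α] [LinearOrder α] [OrderTopology α] [BorelSpace α]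
    [DenselyOrdered α] [NoMinOrder α] (m m' : Measure α) [IsFiniteMeasure m] [IsFiniteMeasure m']
    {D : Set α} (hD : Dense D) (h : ∀ a ∈ D, m (Ici a) = m' (Ici a)) : m = m' := by
  refine Measure.ext_of_Ici m m' fun a ↦ ?_
  obtain ⟨u, hu, hmem, hlim⟩ := hD.exists_seq_strictMono_tendsto a
  have inter_eq : ⋂ n, Ici (u n) = Ici a := by
    ext x
    simp only [mem_iInter, mem_Ici]
    exact ⟨fun hx ↦ le_of_tendsto' hlim hx, fun hx n ↦ (hmem n).1.le.trans hx⟩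
  have tendsto_Ici (ρ : Measure α) [IsFiniteMeasure ρ] :
      Tendsto (fun n ↦ ρ (Ici (u n))) atTop (𝓝 (ρ (Ici a))) := by
    rw [← inter_eq]
    exact tendsto_measure_iInter_atTop (fun n ↦ measurableSet_Ici.nullMeasurableSet)
      (fun i j hij ↦ Ici_subset_Ici.2 (hu.monotone hij)) ⟨0, measure_ne_top _ _⟩
  exact tendsto_nhds_unique (tendsto_Ici m)
    ((tendsto_Ici m').congr fun n ↦ (h _ (hmem n).2).symm)

variable {X Y P Q : Type*} [MeasurableSpace X] [MeasurableSpace Y] [MeasurableSpace P]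
  [MeasurableSpace Q]

theorem snd_restrict_fst_preimage_apply (m : Measure (X × Y)) (A : Set X) {C : Set Y}
    (hC : MeasurableSet C) : (m.restrict (Prod.fst ⁻¹' A)).snd C = m (A ×ˢ C) := by
  rw [Measure.snd_apply hC, Measure.restrict_apply (measurable_snd hC), inter_comm]
  rfl

theorem fst_restrict_snd_preimage_apply (m : Measure (X × Y)) {A : Set X} (C : Set Y)
    (hA : MeasurableSet A) : (m.restrict (Prod.snd ⁻¹' C)).fst A = m (A ×ˢ C) := by
  rw [Measure.fst_apply hA, Measure.restrict_apply (measurable_fst hA)]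
  rfl

/-- A finite measure is determined by its values on `ν`-almost every member of the family `H`. -/
def AEDeterminesMeasures (ν : Measure P) (H : P → Set X) : Prop :=
  ∀ (m m' : Measure X) [IsFiniteMeasure m] [IsFiniteMeasure m'],
    (∀ᵐ p ∂ν, m (H p) = m' (H p)) → m = m'

theorem AEDeterminesMeasures.prod {ν : Measure P} {τ : Measure Q} [SFinite τ] {H : P → Set X}
    {K : Q → Set Y} (hH : AEDeterminesMeasures ν H) (hK : AEDeterminesMeasures τ K)
    (measurableSet_H : ∀ p, MeasurableSet (H p)) (measurableSet_K : ∀ r, MeasurableSet (K r)) :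
    AEDeterminesMeasures (ν.prod τ) fun q ↦ H q.1 ×ˢ K q.2 := by
  intro m m' _ _ h
  have snd_slices : ∀ᵐ p ∂ν, ∀ C, MeasurableSet C → m (H p ×ˢ C) = m' (H p ×ˢ C) := by
    filter_upwards [Measure.ae_ae_of_ae_prod h] with p hp C hC
    rw [← snd_restrict_fst_preimage_apply m _ hC, ← snd_restrict_fst_preimage_apply m' _ hC]
    congr 1
    refine hK _ _ (hp.mono fun r hr ↦ ?_)
    simpa only [snd_restrict_fst_preimage_apply _ _ (measurableSet_K r)] using hr
  refine Measure.ext_prod fun {A C} hA hC ↦ ?_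
  rw [← fst_restrict_snd_preimage_apply m C hA, ← fst_restrict_snd_preimage_apply m' C hA]
  congr 1
  refine hH _ _ (snd_slices.mono fun p hp ↦ ?_)
  simpa only [fst_restrict_snd_preimage_apply _ _ (measurableSet_H p)] using hp C hC

end Determination

section Crofton

open Set
open scoped symmDiff

variable {X P : Type*}

/-- The difference of the indicator of `A` at two points: its absolute value is `1` if `A` separates
`x` and `y`, and `0` otherwise. -/
noncomputable def indicatorDiff (A : Set X) (x y : X) : ℝ := A.indicator 1 x - A.indicator 1 y

theorem sq_indicatorDiff (A : Set X) (x y : X) :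
    indicatorDiff A x y ^ 2 = |indicatorDiff A x y| := by
  by_cases hx : x ∈ A <;> by_cases hy : y ∈ A <;> simp [indicatorDiff, hx, hy]

theorem abs_indicatorDiff_le_one (A : Set X) (x y : X) : |indicatorDiff A x y| ≤ 1 := by
  by_cases hx : x ∈ A <;> by_cases hy : y ∈ A <;> simp [indicatorDiff, hx, hy]

theorem abs_indicatorDiff_eq_indicator (H : P → Set X) (x y : X) (p : P) :
    |indicatorDiff (H p) x y| = ({p | x ∈ H p} ∆ {p | y ∈ H p}).indicator 1 p := by
  by_cases hx : x ∈ H p <;> by_cases hy : y ∈ H p <;>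
    simp [indicatorDiff, hx, hy, mem_symmDiff, indicator]

theorem indicatorDiff_mul (A : Set X) (x₁ x₂ x₃ x₄ : X) :
    indicatorDiff A x₁ x₄ * indicatorDiff A x₂ x₃ = -(1 / 2) *
      (|indicatorDiff A x₁ x₂| - |indicatorDiff A x₁ x₃| - |indicatorDiff A x₄ x₂| +
        |indicatorDiff A x₄ x₃|) := by
  -- Absolute values of indicator differences are squares, so this is a polarisation identity.
  simp only [← sq_indicatorDiff]
  simp only [indicatorDiff]
  ring

variable [MeasurableSpace X] [MeasurableSpace P]

theorem measurable_indicatorDiff {H : P → Set X}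
    (hH : MeasurableSet {z : P × X | z.2 ∈ H z.1}) :
    Measurable fun z : P × X × X ↦ indicatorDiff (H z.1) z.2.1 z.2.2 := by
  have measurable_ind : Measurable ({z : P × X | z.2 ∈ H z.1}.indicator (1 : P × X → ℝ)) :=
    measurable_one.indicator hH
  exact (measurable_ind.comp (f := fun z : P × X × X ↦ (z.1, z.2.1)) (by fun_prop)).sub
    (measurable_ind.comp (f := fun z : P × X × X ↦ (z.1, z.2.2)) (by fun_prop))

variable [PseudoMetricSpace X]

/-- The double difference of distances whose products define the distance covariance. -/
noncomputable def distDiff (x₁ x₂ x₃ x₄ : X) : ℝ :=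
  dist x₁ x₂ - dist x₁ x₃ - dist x₄ x₂ + dist x₄ x₃

/-- A Crofton formula for the metric of `X`: the distance of two points is the `ν`-measure of the
members of the family `H` that separate them. -/
structure IsCroftonFamily (ν : Measure P) (H : P → Set X) : Prop where
  measurableSet_mem : MeasurableSet {z : P × X | z.2 ∈ H z.1}
  measure_symmDiff : ∀ x y, ν ({p | x ∈ H p} ∆ {p | y ∈ H p}) = edist x y

namespace IsCroftonFamily

variable {ν : Measure P} {H : P → Set X}

theorem measurableSet (hH : IsCroftonFamily ν H) (p : P) : MeasurableSet (H p) :=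
  measurable_prodMk_left hH.measurableSet_mem

theorem measurableSet_symmDiff (hH : IsCroftonFamily ν H) (x y : X) :
    MeasurableSet ({p | x ∈ H p} ∆ {p | y ∈ H p}) :=
  (measurable_prodMk_right hH.measurableSet_mem).symmDiff
    (measurable_prodMk_right hH.measurableSet_mem)

theorem integrable_abs_indicatorDiff (hH : IsCroftonFamily ν H) (x y : X) :
    Integrable (fun p ↦ |indicatorDiff (H p) x y|) ν := by
  simp only [abs_indicatorDiff_eq_indicator]
  refine (integrable_indicator_iff (hH.measurableSet_symmDiff x y)).2 (integrableOn_const ?_)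
  rw [hH.measure_symmDiff]
  exact edist_ne_top x y

theorem integral_abs_indicatorDiff (hH : IsCroftonFamily ν H) (x y : X) :
    ∫ p, |indicatorDiff (H p) x y| ∂ν = dist x y := by
  simp only [abs_indicatorDiff_eq_indicator]
  rw [integral_indicator_one (hH.measurableSet_symmDiff x y), measureReal_def,
    hH.measure_symmDiff, dist_edist]

theorem integral_indicatorDiff_mul (hH : IsCroftonFamily ν H) (x₁ x₂ x₃ x₄ : X) :
    ∫ p, indicatorDiff (H p) x₁ x₄ * indicatorDiff (H p) x₂ x₃ ∂ν =
      -(1 / 2) * distDiff x₁ x₂ x₃ x₄ := by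
  have integrable (x y : X) := hH.integrable_abs_indicatorDiff x y
  simp only [indicatorDiff_mul]
  rw [integral_const_mul, integral_add (by fun_prop) (by fun_prop),
    integral_sub (by fun_prop) (by fun_prop), integral_sub (by fun_prop) (by fun_prop)]
  simp only [hH.integral_abs_indicatorDiff, distDiff]

theorem integrable_abs_indicatorDiff_prod [SFinite ν] (hH : IsCroftonFamily ν H) {Z : Type*}
    [MeasurableSpace Z] {m : Measure Z} {u v : Z → X} (hu : Measurable u) (hv : Measurable v)
    (huv : Integrable (fun z ↦ dist (u z) (v z)) m) :
    Integrable (fun w : Z × P ↦ |indicatorDiff (H w.2) (u w.1) (v w.1)|) (m.prod ν) := by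
  have hm : Measurable fun w : Z × P ↦ |indicatorDiff (H w.2) (u w.1) (v w.1)| :=
    ((measurable_indicatorDiff hH.measurableSet_mem).comp
      (f := fun w : Z × P ↦ (w.2, u w.1, v w.1)) (by fun_prop)).abs
  refine (integrable_prod_iff hm.aestronglyMeasurable).2
    ⟨.of_forall fun z ↦ hH.integrable_abs_indicatorDiff (u z) (v z), ?_⟩
  simpa only [Real.norm_eq_abs, abs_abs, hH.integral_abs_indicatorDiff] using huv

end IsCroftonFamily

end Crofton

section HalfSpace

open Set ProbabilityTheory
open scoped ENNReal NNReal symmDiff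

variable {E : Type*} [NormedAddCommGroup E] [InnerProductSpace ℝ E]

/-- The closed half-space `{x | s ≤ ⟪g, x⟫}` with parameter `p = (g, s)`. The normal vector `g` is
not normalised, so that it can be drawn from a Gaussian measure. -/
def halfSpace (p : E × ℝ) : Set E := {x | p.2 ≤ inner ℝ p.1 x}

theorem volume_symmDiff_halfSpace (g x y : E) :
    volume ({s : ℝ | x ∈ halfSpace (g, s)} ∆ {s | y ∈ halfSpace (g, s)}) =
      ‖(inner ℝ (x - y) g : ℝ)‖ₑ := by
  have symmDiff_eq : {s : ℝ | x ∈ halfSpace (g, s)} ∆ {s | y ∈ halfSpace (g, s)} =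
      uIoc (inner ℝ g y) (inner ℝ g x) := by
    ext s
    simp only [mem_symmDiff, mem_ofPred_eq, halfSpace, mem_uIoc]
    grind
  rw [symmDiff_eq, Real.volume_uIoc, ← inner_sub_right, real_inner_comm, Real.enorm_eq_ofReal_abs]

variable [MeasurableSpace E] [BorelSpace E]

theorem charFun_eq_charFun_map_inner (m : Measure E) (g : E) :
    charFun m g = charFun (m.map (inner ℝ g)) 1 := by
  rw [charFun_eq_charFunDual_toDualMap, charFunDual_eq_charFun_map_one]
  rfl

theorem measurableSet_mem_halfSpace [SecondCountableTopology E] :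
    MeasurableSet {z : (E × ℝ) × E | z.2 ∈ halfSpace z.1} := by
  simp only [halfSpace, mem_ofPred_eq]
  exact measurableSet_le (by fun_prop) (by fun_prop)

theorem map_inner_apply_Ici (m : Measure E) (g : E) (s : ℝ) :
    m.map (inner ℝ g) (Ici s) = m (halfSpace (g, s)) :=
  Measure.map_apply (f := inner ℝ g) (by fun_prop) measurableSet_Ici

theorem aeDeterminesMeasures_halfSpace [SecondCountableTopology E] [CompleteSpace E]
    (γ : Measure E) [γ.IsOpenPosMeasure] :
    AEDeterminesMeasures (γ.prod volume) (halfSpace : E × ℝ → Set E) := by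
  intro m m' _ _ h
  have map_inner_eq : ∀ᵐ g ∂γ, m.map (inner ℝ g) = m'.map (inner ℝ g) := by
    filter_upwards [Measure.ae_ae_of_ae_prod h] with g hg
    refine ext_of_dense_Ici _ _ (Measure.dense_of_ae hg) fun s hs ↦ ?_
    rw [map_inner_apply_Ici, map_inner_apply_Ici]
    exact hs
  refine Measure.ext_of_charFun ((continuous_charFun.ae_eq_iff_eq γ continuous_charFun).1 ?_)
  filter_upwards [map_inner_eq] with g hg
  rw [charFun_eq_charFun_map_inner m, charFun_eq_charFun_map_inner m', hg]

variable [FiniteDimensional ℝ E]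

instance isOpenPosMeasure_gaussianReal (m : ℝ) (v : ℝ≥0) [NeZero v] :
    (gaussianReal m v).IsOpenPosMeasure :=
  (gaussianReal_absolutelyContinuous' m (NeZero.ne v)).isOpenPosMeasure

instance isOpenPosMeasure_stdGaussian : (stdGaussian E).IsOpenPosMeasure := by
  refine Continuous.isOpenPosMeasure_map (by fun_prop) fun v ↦ ?_
  exact ⟨(stdOrthonormalBasis ℝ E).repr v, (stdOrthonormalBasis ℝ E).sum_repr v⟩

theorem stdGaussian_map_inner (v : E) :
    (stdGaussian E).map (inner ℝ v) = (gaussianReal 0 1).map (‖v‖ * ·) := by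
  have h := IsGaussian.map_eq_gaussianReal (μ := stdGaussian E) (innerSL ℝ v)
  rw [integral_strongDual_stdGaussian, variance_dual_stdGaussian, innerSL_apply_norm] at h
  rw [gaussianReal_map_const_mul, mul_zero, mul_one]
  exact h.trans (congrArg (gaussianReal 0) (Real.toNNReal_of_nonneg (sq_nonneg _)))

/-- The first absolute moment of the standard Gaussian law on `ℝ`. -/
noncomputable def gaussianAbsMoment : ℝ≥0∞ := ∫⁻ t : ℝ, ‖t‖ₑ ∂gaussianReal 0 1

theorem gaussianAbsMoment_ne_zero : gaussianAbsMoment ≠ 0 := by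
  intro h
  have id_ae_zero : (id : ℝ → ℝ) =ᵐ[gaussianReal 0 1] 0 := by
    filter_upwards [(lintegral_eq_zero_iff (by fun_prop)).1 h] with t ht
    exact enorm_eq_zero.1 ht
  exact one_ne_zero (congrFun ((continuous_id.ae_eq_iff_eq _ continuous_zero).1 id_ae_zero) 1)

theorem gaussianAbsMoment_ne_top : gaussianAbsMoment ≠ ⊤ :=
  (IsGaussian.integrable_id (μ := gaussianReal 0 1)).2.ne

theorem lintegral_enorm_inner_stdGaussian (v : E) :
    ∫⁻ g, ‖(inner ℝ v g : ℝ)‖ₑ ∂stdGaussian E = gaussianAbsMoment * ‖v‖ₑ := by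
  rw [← lintegral_map (f := fun t : ℝ ↦ ‖t‖ₑ) (by fun_prop) (by fun_prop),
    stdGaussian_map_inner, lintegral_map (by fun_prop) (by fun_prop)]
  simp only [enorm_mul, enorm_norm]
  rw [lintegral_const_mul _ (by fun_prop), mul_comm, gaussianAbsMoment]

/-- The measure on pairs `(g, s)` with `g` standard Gaussian and `s` distributed by Lebesgue
measure, normalised so that the half-spaces separating two points have mass their distance. -/
noncomputable def halfSpaceMeasure (E : Type*) [NormedAddCommGroup E] [InnerProductSpace ℝ E]
    [MeasurableSpace E] [BorelSpace E] [FiniteDimensional ℝ E] : Measure (E × ℝ) :=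
  gaussianAbsMoment⁻¹ • (stdGaussian E).prod volume

instance sFinite_halfSpaceMeasure : SFinite (halfSpaceMeasure E) := by
  unfold halfSpaceMeasure
  infer_instance

theorem isCroftonFamily_halfSpace : IsCroftonFamily (halfSpaceMeasure E) halfSpace where
  measurableSet_mem := measurableSet_mem_halfSpace
  measure_symmDiff x y := by
    have measurableSet_symmDiff : MeasurableSet
        ({p : E × ℝ | x ∈ halfSpace p} ∆ {p | y ∈ halfSpace p}) :=
      (measurable_prodMk_right measurableSet_mem_halfSpace).symmDiff
        (measurable_prodMk_right measurableSet_mem_halfSpace)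
    calc halfSpaceMeasure E ({p | x ∈ halfSpace p} ∆ {p | y ∈ halfSpace p})
      _ = gaussianAbsMoment⁻¹ * ∫⁻ g, ‖(inner ℝ (x - y) g : ℝ)‖ₑ ∂stdGaussian E := by
        simp only [halfSpaceMeasure, Measure.smul_apply, smul_eq_mul,
          Measure.prod_apply measurableSet_symmDiff, ← volume_symmDiff_halfSpace]
        rfl
      _ = edist x y := by
        rw [lintegral_enorm_inner_stdGaussian, ← mul_assoc,
          ENNReal.inv_mul_cancel gaussianAbsMoment_ne_zero gaussianAbsMoment_ne_top, one_mul,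
          edist_eq_enorm_sub]

theorem aeDeterminesMeasures_halfSpaceMeasure :
    AEDeterminesMeasures (halfSpaceMeasure E) halfSpace := fun m m' _ _ h ↦
  aeDeterminesMeasures_halfSpace (stdGaussian E) m m' <|
    (Measure.ae_ennreal_smul_measure_iff (ENNReal.inv_ne_zero.2 gaussianAbsMoment_ne_top)).1 h

end HalfSpace

section DistanceCovariance

open Set

section Product

variable {Z W P Q : Type*} [MeasurableSpace Z] [MeasurableSpace W] [MeasurableSpace P]
  [MeasurableSpace Q]

theorem measurePreserving_prodProdProdComm (m : Measure Z) (m' : Measure W) (ν : Measure P)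
    (τ : Measure Q) [SFinite m] [SFinite m'] [SFinite ν] [SFinite τ] :
    MeasurePreserving (Equiv.prodProdProdComm Z W P Q) ((m.prod m').prod (ν.prod τ))
      ((m.prod ν).prod (m'.prod τ)) := by
  have swap_middle : MeasurePreserving (fun w : W × P × Q ↦ (w.2.1, w.1, w.2.2))
      (m'.prod (ν.prod τ)) (ν.prod (m'.prod τ)) :=
    (measurePreserving_prodAssoc ν m' τ).comp <|
      (Measure.measurePreserving_swap.prod (.id τ)).comp <|
      (measurePreserving_prodAssoc m' ν τ).symm
  exact (measurePreserving_prodAssoc m ν (m'.prod τ)).symm.comp <|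
    ((MeasurePreserving.id m).prod swap_middle).comp <|
    measurePreserving_prodAssoc m m' (ν.prod τ)

/-- The rearrangement of two pairs `((z₁, z₄), (z₂, z₃))` into the quadruple `z₁, z₂, z₃, z₄`. The
double difference `distDiff` of the quadruple is an integral of functions of the first pair times
functions of the second. -/
def interleave : (Z × Z) × (Z × Z) ≃ᵐ (Fin 4 → Z) where
  toFun w := ![w.1.1, w.2.1, w.2.2, w.1.2]
  invFun z := ((z 0, z 3), (z 1, z 2))
  left_inv _ := rfl
  right_inv z := by ext i; fin_cases i <;> rfl
  measurable_toFun := by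
    change Measurable fun w : (Z × Z) × (Z × Z) ↦ ![w.1.1, w.2.1, w.2.2, w.1.2]
    refine measurable_pi_lambda _ fun i ↦ ?_
    fin_cases i <;> dsimp <;> fun_prop
  measurable_invFun := by
    change Measurable fun z : Fin 4 → Z ↦ ((z 0, z 3), (z 1, z 2))
    fun_prop

theorem measurePreserving_interleave (μ : Measure Z) [SigmaFinite μ] :
    MeasurePreserving interleave ((μ.prod μ).prod (μ.prod μ)) (Measure.pi fun _ ↦ μ) := by
  refine ⟨interleave.measurable, (Measure.pi_eq fun s _ ↦ ?_).symm⟩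
  have preimage_pi : interleave ⁻¹' univ.pi s = (s 0 ×ˢ s 3) ×ˢ (s 1 ×ˢ s 2) := by
    ext w
    refine ⟨fun h ↦ ⟨⟨h 0 trivial, h 3 trivial⟩, h 1 trivial, h 2 trivial⟩, fun h i _ ↦ ?_⟩
    fin_cases i
    exacts [h.1.1, h.2.1, h.2.2, h.1.2]
  rw [interleave.map_apply, preimage_pi]
  simp only [Measure.prod_prod, Fin.prod_univ_four]
  ring

theorem sq_integral_eq_integral_prod (m : Measure Z) [SFinite m] (f : Z → ℝ) :
    (∫ z, f z ∂m) ^ 2 = ∫ w, f w.1 * f w.2 ∂m.prod m := by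
  rw [integral_prod_mul, sq]

theorem integrable_sq_integral {m : Measure Z} {ν : Measure Q} [SFinite m] [SFinite ν]
    {f : Q → Z → ℝ}
    (hf : Integrable (fun w : (Z × Z) × Q ↦ f w.2 w.1.1 * f w.2 w.1.2) ((m.prod m).prod ν)) :
    Integrable (fun q ↦ (∫ z, f q z ∂m) ^ 2) ν := by
  simp only [sq_integral_eq_integral_prod]
  exact hf.integral_prod_right

theorem integral_sq_integral {m : Measure Z} {ν : Measure Q} [SFinite m] [SFinite ν]
    {f : Q → Z → ℝ}
    (hf : Integrable (fun w : (Z × Z) × Q ↦ f w.2 w.1.1 * f w.2 w.1.2) ((m.prod m).prod ν)) :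
    ∫ q, (∫ z, f q z ∂m) ^ 2 ∂ν = ∫ w, ∫ q, f q w.1 * f q w.2 ∂ν ∂m.prod m := by
  simp only [sq_integral_eq_integral_prod]
  exact (integral_integral_swap hf).symm

theorem integral_prod_sub_mul_sub (μ : Measure Z) [IsProbabilityMeasure μ] {f g : Z → ℝ}
    (hf : Integrable f μ) (hg : Integrable g μ) (hfg : Integrable (fun z ↦ f z * g z) μ) :
    ∫ w, (f w.1 - f w.2) * (g w.1 - g w.2) ∂μ.prod μ =
      2 * (∫ z, f z * g z ∂μ - (∫ z, f z ∂μ) * ∫ z, g z ∂μ) := by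
  have expand (w : Z × Z) : (f w.1 - f w.2) * (g w.1 - g w.2) =
      f w.1 * g w.1 + f w.2 * g w.2 - (f w.1 * g w.2 + g w.1 * f w.2) := by ring
  have integrable_fst : Integrable (fun w : Z × Z ↦ f w.1 * g w.1) (μ.prod μ) := hfg.comp_fst μ
  have integrable_snd : Integrable (fun w : Z × Z ↦ f w.2 * g w.2) (μ.prod μ) := hfg.comp_snd μ
  simp only [expand]
  rw [integral_sub (by fun_prop) (by fun_prop), integral_add (by fun_prop) (by fun_prop),
    integral_add (by fun_prop) (by fun_prop), integral_prod_mul, integral_prod_mul,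
    integral_fun_fst fun z ↦ f z * g z, integral_fun_snd fun z ↦ f z * g z,
    probReal_univ, one_smul]
  ring

theorem integrable_dist_prod {E : Type*} [NormedAddCommGroup E] {μ : Measure Z} [IsFiniteMeasure μ]
    {f : Z → E} (hf : Integrable f μ) :
    Integrable (fun w : Z × Z ↦ dist (f w.1) (f w.2)) (μ.prod μ) := by
  simp only [dist_eq_norm]
  exact ((hf.comp_fst μ).sub (hf.comp_snd μ)).norm

end Product

variable {X Y : Type*}

/-- The product of the indicator differences of `A` and `C` at two points of `X × Y`. Its mean over
two independent draws is twice the covariance of the indicators of `A` and `C`. -/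
noncomputable def prodIndicatorDiff (A : Set X) (C : Set Y) (z : (X × Y) × (X × Y)) : ℝ :=
  indicatorDiff A z.1.1 z.2.1 * indicatorDiff C z.1.2 z.2.2

theorem abs_prodIndicatorDiff_mul_le (A : Set X) (C : Set Y) (z w : (X × Y) × (X × Y)) :
    |prodIndicatorDiff A C z * prodIndicatorDiff A C w| ≤
      |indicatorDiff A z.1.1 z.2.1| * |indicatorDiff C w.1.2 w.2.2| := by
  have hz : |prodIndicatorDiff A C z| ≤ |indicatorDiff A z.1.1 z.2.1| := by
    rw [prodIndicatorDiff, abs_mul]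
    exact mul_le_of_le_one_right (abs_nonneg _) (abs_indicatorDiff_le_one ..)
  have hw : |prodIndicatorDiff A C w| ≤ |indicatorDiff C w.1.2 w.2.2| := by
    rw [prodIndicatorDiff, abs_mul]
    exact mul_le_of_le_one_left (abs_nonneg _) (abs_indicatorDiff_le_one ..)
  rw [abs_mul]
  gcongr

variable [MeasurableSpace X] [MeasurableSpace Y]

theorem integral_prodIndicatorDiff (μ : Measure (X × Y)) [IsProbabilityMeasure μ] {A : Set X}
    {C : Set Y} (hA : MeasurableSet A) (hC : MeasurableSet C) :
    ∫ z, prodIndicatorDiff A C z ∂μ.prod μ =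
      2 * (μ.real (A ×ˢ C) - (μ.fst.prod μ.snd).real (A ×ˢ C)) := by
  have hA' : MeasurableSet (Prod.fst ⁻¹' A : Set (X × Y)) := measurable_fst hA
  have hC' : MeasurableSet (Prod.snd ⁻¹' C : Set (X × Y)) := measurable_snd hC
  have integrable_indicator {s : Set (X × Y)} (hs : MeasurableSet s) :
      Integrable (s.indicator (1 : X × Y → ℝ)) μ := (integrable_const 1).indicator hs
  have indicator_mul : (fun z ↦ (Prod.fst ⁻¹' A).indicator 1 z * (Prod.snd ⁻¹' C).indicator 1 z) =
      (A ×ˢ C).indicator (1 : X × Y → ℝ) := by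
    rw [prod_eq, inter_indicator_one]
    rfl
  refine (integral_prod_sub_mul_sub μ (integrable_indicator hA') (integrable_indicator hC')
    (indicator_mul ▸ integrable_indicator (hA.prod hC))).trans ?_
  rw [indicator_mul, integral_indicator_one (hA.prod hC), integral_indicator_one hA',
    integral_indicator_one hC', measureReal_prod_prod, measureReal_def (μ := μ.fst),
    measureReal_def (μ := μ.snd), Measure.fst_apply hA, Measure.snd_apply hC]
  rfl

variable [PseudoMetricSpace X] [PseudoMetricSpace Y]

/-- Four times the distance covariance of the joint law `μ`: the expectation, over four independent
draws from `μ`, of the product of the double differences of distances of the two components. -/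
noncomputable def distCov (μ : Measure (X × Y)) : ℝ :=
  ∫ z : Fin 4 → X × Y, distDiff (z 0).1 (z 1).1 (z 2).1 (z 3).1 *
    distDiff (z 0).2 (z 1).2 (z 2).2 (z 3).2 ∂Measure.pi fun _ ↦ μ

theorem distCov_eq_integral_prod (μ : Measure (X × Y)) [SigmaFinite μ] :
    distCov μ = ∫ w, distDiff w.1.1.1 w.2.1.1 w.2.2.1 w.1.2.1 *
      distDiff w.1.1.2 w.2.1.2 w.2.2.2 w.1.2.2 ∂(μ.prod μ).prod (μ.prod μ) :=
  ((measurePreserving_interleave μ).integral_comp' _).symm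

namespace IsCroftonFamily

variable {P Q : Type*} [MeasurableSpace P] [MeasurableSpace Q] {ν : Measure P} {τ : Measure Q}
  {H : P → Set X} {K : Q → Set Y}

theorem measurable_prodIndicatorDiff (hH : IsCroftonFamily ν H) (hK : IsCroftonFamily τ K) :
    Measurable fun w : (P × Q) × (X × Y) × (X × Y) ↦ prodIndicatorDiff (H w.1.1) (K w.1.2) w.2 :=
  ((measurable_indicatorDiff hH.measurableSet_mem).comp
    (f := fun w : (P × Q) × (X × Y) × (X × Y) ↦ (w.1.1, w.2.1.1, w.2.2.1)) (by fun_prop)).mul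
  ((measurable_indicatorDiff hK.measurableSet_mem).comp
    (f := fun w : (P × Q) × (X × Y) × (X × Y) ↦ (w.1.2, w.2.1.2, w.2.2.2)) (by fun_prop))

variable [SFinite ν] [SFinite τ]

theorem integral_prodIndicatorDiff_mul (hH : IsCroftonFamily ν H) (hK : IsCroftonFamily τ K)
    (z w : (X × Y) × (X × Y)) :
    ∫ q, prodIndicatorDiff (H q.1) (K q.2) z * prodIndicatorDiff (H q.1) (K q.2) w ∂ν.prod τ =
      1 / 4 * (distDiff z.1.1 w.1.1 w.2.1 z.2.1 * distDiff z.1.2 w.1.2 w.2.2 z.2.2) := by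
  simp only [prodIndicatorDiff, mul_mul_mul_comm]
  rw [integral_prod_mul (fun p ↦ indicatorDiff (H p) z.1.1 z.2.1 * indicatorDiff (H p) w.1.1 w.2.1)
    (fun r ↦ indicatorDiff (K r) z.1.2 z.2.2 * indicatorDiff (K r) w.1.2 w.2.2),
    hH.integral_indicatorDiff_mul, hK.integral_indicatorDiff_mul]
  ring

variable {μ : Measure (X × Y)} [IsProbabilityMeasure μ]

theorem integrable_prodIndicatorDiff_mul (hH : IsCroftonFamily ν H) (hK : IsCroftonFamily τ K)
    (hX : Integrable (fun z : (X × Y) × (X × Y) ↦ dist z.1.1 z.2.1) (μ.prod μ))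
    (hY : Integrable (fun z : (X × Y) × (X × Y) ↦ dist z.1.2 z.2.2) (μ.prod μ)) :
    Integrable (fun w : (((X × Y) × (X × Y)) × ((X × Y) × (X × Y))) × (P × Q) ↦
      prodIndicatorDiff (H w.2.1) (K w.2.2) w.1.1 * prodIndicatorDiff (H w.2.1) (K w.2.2) w.1.2)
      (((μ.prod μ).prod (μ.prod μ)).prod (ν.prod τ)) := by
  have bound := (measurePreserving_prodProdProdComm _ _ ν τ).integrable_comp_of_integrable
    ((hH.integrable_abs_indicatorDiff_prod (by fun_prop) (by fun_prop) hX).mul_prod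
      (hK.integrable_abs_indicatorDiff_prod (by fun_prop) (by fun_prop) hY))
  refine bound.mono' ?_ (.of_forall fun w ↦ abs_prodIndicatorDiff_mul_le ..)
  exact (((hH.measurable_prodIndicatorDiff hK).comp (f := fun w : (((X × Y) × (X × Y)) ×
      ((X × Y) × (X × Y))) × (P × Q) ↦ (w.2, w.1.1)) (by fun_prop)).mul
    ((hH.measurable_prodIndicatorDiff hK).comp (f := fun w : (((X × Y) × (X × Y)) ×
      ((X × Y) × (X × Y))) × (P × Q) ↦ (w.2, w.1.2)) (by fun_prop))).aestronglyMeasurable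

theorem distCov_eq_integral_sq (hH : IsCroftonFamily ν H) (hK : IsCroftonFamily τ K)
    (hX : Integrable (fun z : (X × Y) × (X × Y) ↦ dist z.1.1 z.2.1) (μ.prod μ))
    (hY : Integrable (fun z : (X × Y) × (X × Y) ↦ dist z.1.2 z.2.2) (μ.prod μ)) :
    distCov μ = 16 * ∫ q, (μ.real (H q.1 ×ˢ K q.2) -
      (μ.fst.prod μ.snd).real (H q.1 ×ˢ K q.2)) ^ 2 ∂ν.prod τ := by
  have h := integral_sq_integral (m := μ.prod μ) (ν := ν.prod τ)
    (f := fun q ↦ prodIndicatorDiff (H q.1) (K q.2))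
    (hH.integrable_prodIndicatorDiff_mul hK hX hY)
  simp only [integral_prodIndicatorDiff μ (hH.measurableSet _) (hK.measurableSet _), mul_pow,
    hH.integral_prodIndicatorDiff_mul hK, integral_const_mul,
    ← distCov_eq_integral_prod] at h
  linarith

theorem integrable_sq_measureReal_prod_sub (hH : IsCroftonFamily ν H) (hK : IsCroftonFamily τ K)
    (hX : Integrable (fun z : (X × Y) × (X × Y) ↦ dist z.1.1 z.2.1) (μ.prod μ))
    (hY : Integrable (fun z : (X × Y) × (X × Y) ↦ dist z.1.2 z.2.2) (μ.prod μ)) :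
    Integrable (fun q ↦ (μ.real (H q.1 ×ˢ K q.2) -
      (μ.fst.prod μ.snd).real (H q.1 ×ˢ K q.2)) ^ 2) (ν.prod τ) := by
  have h := integrable_sq_integral (m := μ.prod μ) (ν := ν.prod τ)
    (f := fun q ↦ prodIndicatorDiff (H q.1) (K q.2))
    (hH.integrable_prodIndicatorDiff_mul hK hX hY)
  simp only [integral_prodIndicatorDiff μ (hH.measurableSet _) (hK.measurableSet _), mul_pow] at h
  exact (integrable_const_mul_iff (by norm_num) _).1 h

theorem distCov_nonneg (hH : IsCroftonFamily ν H) (hK : IsCroftonFamily τ K)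
    (hX : Integrable (fun z : (X × Y) × (X × Y) ↦ dist z.1.1 z.2.1) (μ.prod μ))
    (hY : Integrable (fun z : (X × Y) × (X × Y) ↦ dist z.1.2 z.2.2) (μ.prod μ)) :
    0 ≤ distCov μ := by
  rw [hH.distCov_eq_integral_sq hK hX hY]
  positivity

theorem distCov_eq_zero_iff (hH : IsCroftonFamily ν H) (hK : IsCroftonFamily τ K)
    (hX : Integrable (fun z : (X × Y) × (X × Y) ↦ dist z.1.1 z.2.1) (μ.prod μ))
    (hY : Integrable (fun z : (X × Y) × (X × Y) ↦ dist z.1.2 z.2.2) (μ.prod μ))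
    (determines_H : AEDeterminesMeasures ν H) (determines_K : AEDeterminesMeasures τ K) :
    distCov μ = 0 ↔ μ = μ.fst.prod μ.snd := by
  rw [hH.distCov_eq_integral_sq hK hX hY, mul_eq_zero_iff_left (by norm_num),
    integral_eq_zero_iff_of_nonneg (fun _ ↦ sq_nonneg _)
      (hH.integrable_sq_measureReal_prod_sub hK hX hY)]
  refine ⟨fun h ↦ determines_H.prod determines_K hH.measurableSet hK.measurableSet _ _ ?_,
    fun h ↦ .of_forall fun q ↦ ?_⟩
  · filter_upwards [h] with q hq
    exact (measureReal_eq_measureReal_iff).1 (sub_eq_zero.1 (pow_eq_zero_iff two_ne_zero |>.1 hq))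
  · simp only [← h, sub_self, Pi.zero_apply, zero_pow two_ne_zero]

end IsCroftonFamily

end DistanceCovariance

theorem distance_covariance_nonneg_and_eq_zero_iff_indep_general {E F : Type*}
    [NormedAddCommGroup E] [InnerProductSpace ℝ E] [FiniteDimensional ℝ E] [MeasurableSpace E]
    [BorelSpace E] [NormedAddCommGroup F] [InnerProductSpace ℝ F] [FiniteDimensional ℝ F]
    [MeasurableSpace F] [BorelSpace F] (μ : Measure (E × F)) [IsProbabilityMeasure μ]
    (h_mom1 : Integrable (fun z : E × F ↦ ‖z.1‖) μ)
    (h_mom2 : Integrable (fun z : E × F ↦ ‖z.2‖) μ) :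
    0 ≤ distCov μ ∧ (distCov μ = 0 ↔ μ = μ.fst.prod μ.snd) := by
  have integrable_dist_fst := integrable_dist_prod
    ((integrable_norm_iff measurable_fst.aestronglyMeasurable).1 h_mom1)
  have integrable_dist_snd := integrable_dist_prod
    ((integrable_norm_iff measurable_snd.aestronglyMeasurable).1 h_mom2)
  exact ⟨isCroftonFamily_halfSpace.distCov_nonneg isCroftonFamily_halfSpace integrable_dist_fst
    integrable_dist_snd, isCroftonFamily_halfSpace.distCov_eq_zero_iff isCroftonFamily_halfSpace
    integrable_dist_fst integrable_dist_snd aeDeterminesMeasures_halfSpaceMeasure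
    aeDeterminesMeasures_halfSpaceMeasure⟩

/-- for a pair `(X1, X2)` of random vectors in `ℝ^{d1} × ℝ^{d2}` whose joint
law `μ` is absolutely continuous w.r.t. Lebesgue measure and which has finite first moments,
the expectation
`E[∏_{k=1,2} (‖X_{k1}−X_{k2}‖ − ‖X_{k1}−X_{k3}‖ − ‖X_{k4}−X_{k2}‖ + ‖X_{k4}−X_{k3}‖)]`
(over four independent copies of the pair) is nonnegative, and it vanishes if and only if
`X1` and `X2` are independent (i.e. `μ` is the product of its marginals). -/
theorem distance_covariance_nonneg_and_eq_zero_iff_indep {d1 d2 : ℕ}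
    (μ : Measure (EuclideanSpace ℝ (Fin d1) × EuclideanSpace ℝ (Fin d2)))
    [IsProbabilityMeasure μ]
    (h_ac : μ ≪ (volume : Measure (EuclideanSpace ℝ (Fin d1) × EuclideanSpace ℝ (Fin d2))))
    (h_mom1 : Integrable (fun z : EuclideanSpace ℝ (Fin d1) × EuclideanSpace ℝ (Fin d2)
      => ‖z.1‖) μ)
    (h_mom2 : Integrable (fun z : EuclideanSpace ℝ (Fin d1) × EuclideanSpace ℝ (Fin d2)
      => ‖z.2‖) μ) :
    0 ≤ ∫ x, (‖(x 0).1 - (x 1).1‖ - ‖(x 0).1 - (x 2).1‖ - ‖(x 3).1 - (x 1).1‖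
          + ‖(x 3).1 - (x 2).1‖)
        * (‖(x 0).2 - (x 1).2‖ - ‖(x 0).2 - (x 2).2‖ - ‖(x 3).2 - (x 1).2‖
          + ‖(x 3).2 - (x 2).2‖)
        ∂(Measure.pi fun _ : Fin 4 => μ)
    ∧ ((∫ x, (‖(x 0).1 - (x 1).1‖ - ‖(x 0).1 - (x 2).1‖ - ‖(x 3).1 - (x 1).1‖
          + ‖(x 3).1 - (x 2).1‖)
        * (‖(x 0).2 - (x 1).2‖ - ‖(x 0).2 - (x 2).2‖ - ‖(x 3).2 - (x 1).2‖
          + ‖(x 3).2 - (x 2).2‖)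
        ∂(Measure.pi fun _ : Fin 4 => μ)) = 0
      ↔ μ = μ.fst.prod μ.snd) := by
  simpa only [distCov, distDiff, dist_eq_norm] using
    distance_covariance_nonneg_and_eq_zero_iff_indep_general μ h_mom1 h_mom2
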